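/- With the construction setup fixed (alphabet B = Fin n ⊕ Unit, idempotent word e, inverse monoid M = Inv⟨B | e·r₁ = 1, r₂ = 1, …, r_m = 1⟩ with defining congruence σ, group G = Gp⟨Fin n | r₁ = 1, …, r_m = 1⟩, and T the submonoid of G generated by the images of w₁, …, w_k): if the word problem for M is decidable, i.e., the predicate on pairs (u, v) ∈ FreeMonoid (B × Bool) × FreeMonoid (B × Bool) given by 'σ relates u and v' is ComputablePred, then the membership problem for T within G is decidable, i.e., the predicate on words u ∈ FreeMonoid ((Fin n) × Bool) given by πG(u) ∈ T is ComputablePred. -/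

import Mathlib

/-- The formal inverse of a word over `B`: reverse the word and negate the `Bool` component
of each letter. -/
def wInv {B : Type*} (w : FreeMonoid (B × Bool)) : FreeMonoid (B × Bool) :=
  FreeMonoid.ofList (((FreeMonoid.toList w).map fun p => (p.1, !p.2)).reverse)

/-- The generating relation of the Vagner congruence: `w w⁻¹ w ~ w` and
`w w⁻¹ u u⁻¹ ~ u u⁻¹ w w⁻¹` for all words `u, w`. -/
def vagnerRel (B : Type*) : FreeMonoid (B × Bool) → FreeMonoid (B × Bool) → Prop :=
  fun x y =>
    (∃ w, x = w * wInv w * w ∧ y = w) ∨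
    (∃ u w, x = w * wInv w * (u * wInv u) ∧ y = u * wInv u * (w * wInv w))

/-- The alphabet `B = Fin n ⊕ Unit`, the generators `a₁, …, a_n` together with the extra
generator `t`. -/
abbrev B (n : ℕ) : Type := Fin n ⊕ Unit

/-- Embedding of words over `Fin n` as words over `B n`. -/
def emb {n : ℕ} : FreeMonoid (Fin n × Bool) →* FreeMonoid (B n × Bool) :=
  FreeMonoid.map (fun p => (Sum.inl p.1, p.2))

/-- The one-letter word `t`. -/
def tW (n : ℕ) : FreeMonoid (B n × Bool) := FreeMonoid.of (Sum.inr (), true)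

/-- The one-letter word `t⁻¹`. -/
def tWinv (n : ℕ) : FreeMonoid (B n × Bool) := FreeMonoid.of (Sum.inr (), false)

/-- The one-letter word `aᵢ`. -/
def aW {n : ℕ} (i : Fin n) : FreeMonoid (B n × Bool) := FreeMonoid.of (Sum.inl i, true)

/-- `u ↦ u u⁻¹`. -/
def idem {β : Type*} (u : FreeMonoid (β × Bool)) : FreeMonoid (β × Bool) := u * wInv u

/-- The idempotent word
`e(a₁, …, a_n, t w₁ t⁻¹, …, t w_k t⁻¹, a₁⁻¹, …, a_n⁻¹)`, where `e(u₁, …, u_l)` denotes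
`u₁ u₁⁻¹ ⋯ u_l u_l⁻¹`. -/
def eWord {n k : ℕ} (w : Fin k → FreeMonoid (Fin n × Bool)) : FreeMonoid (B n × Bool) :=
  ((List.ofFn fun i : Fin n => idem (aW i)) ++
    (List.ofFn fun j : Fin k => idem (tW n * emb (w j) * tWinv n)) ++
    (List.ofFn fun i : Fin n => idem (wInv (aW i)))).prod

/-- The congruence `σ` defining the inverse monoid
`M = Inv⟨B | e·r₁ = 1, r₂ = 1, …, r_m = 1⟩`: it is generated by the Vagner congruence
together with the pairs `(e·r₁, 1)` and `(rᵢ, 1)` for `i ≠ 1`. -/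
def invCon {n m k : ℕ} (hm : 0 < m) (r : Fin m → FreeMonoid (Fin n × Bool))
    (w : Fin k → FreeMonoid (Fin n × Bool)) : Con (FreeMonoid (B n × Bool)) :=
  conGen (fun x y => vagnerRel (B n) x y ∨
    (x = eWord w * emb (r ⟨0, hm⟩) ∧ y = 1) ∨
    (∃ i : Fin m, i ≠ ⟨0, hm⟩ ∧ x = emb (r i) ∧ y = 1))

/-- The set of relators of the maximal group image
`K = Gp⟨B | e·r₁ = 1, r₂ = 1, …, r_m = 1⟩`, as elements of `FreeGroup (B n)`. -/
def relsK {n m k : ℕ} (hm : 0 < m) (r : Fin m → FreeMonoid (Fin n × Bool))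
    (w : Fin k → FreeMonoid (Fin n × Bool)) : Set (FreeGroup (B n)) :=
  insert (FreeGroup.mk (FreeMonoid.toList (eWord w * emb (r ⟨0, hm⟩))))
    {x | ∃ i : Fin m, i ≠ ⟨0, hm⟩ ∧ x = FreeGroup.mk (FreeMonoid.toList (emb (r i)))}

/-- The set of relators of the group `G = Gp⟨Fin n | r₁ = 1, …, r_m = 1⟩`. -/
def relsG {n m : ℕ} (r : Fin m → FreeMonoid (Fin n × Bool)) : Set (FreeGroup (Fin n)) :=
  {x | ∃ i : Fin m, x = FreeGroup.mk (FreeMonoid.toList (r i))}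

/-- The canonical evaluation map of words over `Fin n` in the group `G`. -/
def piG {n m : ℕ} (r : Fin m → FreeMonoid (Fin n × Bool)) (u : FreeMonoid (Fin n × Bool)) :
    PresentedGroup (relsG r) :=
  PresentedGroup.mk (relsG r) (FreeGroup.mk (FreeMonoid.toList u))

/-- The submonoid `T` of `G` generated by the images of `w₁, …, w_k`. -/
def subT {n m k : ℕ} (r : Fin m → FreeMonoid (Fin n × Bool))
    (w : Fin k → FreeMonoid (Fin n × Bool)) : Submonoid (PresentedGroup (relsG r)) :=
  Submonoid.closure (Set.range fun j : Fin k => piG r (w j))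

instance {α : Type*} [Primcodable α] : Primcodable (FreeMonoid α) :=
  Primcodable.ofEquiv (List α) FreeMonoid.toList

/-!
The reduction is `πG u ∈ T ↔ (t u t⁻¹)(t u t⁻¹)⁻¹ = 1` in `M`, so that membership in `T` becomes an
instance of the word problem for `M`.

In an inverse monoid, a product of idempotents times `y` is `1` only if all the factors are `1`.
Hence in `M` the letters `aᵢ` are units, every `rᵢ` equals `1`, and each `t wⱼ t⁻¹` is right
invertible. The right invertible elements are closed under multiplication, and
`t u t⁻¹ t v t⁻¹` lies below `t u v t⁻¹` in the natural order, so `t v t⁻¹` is right invertible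
for every `v` representing an element of `T`.

Conversely, `G` acts on `G × G^ℕ × T^ℕ` by right multiplication on the first coordinate, and
`(g, a, b) ↦ (b₀, g :: a, tail b)` is an injection of this set whose image consists of the points
with first coordinate in `T`. Letting `t` act by this injection gives a representation of `M` by
partial bijections in which `t u t⁻¹` is everywhere defined only if `T πG(u) ⊆ T`.
-/

/-! ### Words and homomorphisms from the free inverse monoid -/

section Words

variable {β : Type*}

theorem wInv_of (b : β) (s : Bool) : wInv (FreeMonoid.of (b, s)) = FreeMonoid.of (b, !s) := rfl

theorem wInv_mul (u v : FreeMonoid (β × Bool)) : wInv (u * v) = wInv v * wInv u := by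
  apply FreeMonoid.toList.injective
  simp [wInv]

theorem idem_mul (u v : FreeMonoid (β × Bool)) : idem (u * v) = u * idem v * wInv u := by
  simp only [idem, wInv_mul, mul_assoc]

end Words

theorem mul_eq_one_iff_of_isIdempotentElem {N : Type*} [Monoid N] {e y : N}
    (he : IsIdempotentElem e) : e * y = 1 ↔ e = 1 ∧ y = 1 := by
  refine ⟨fun h => ?_, fun ⟨he', hy⟩ => by rw [he', hy, one_mul]⟩
  have he' : e = 1 := by
    calc e = e * (e * y) := by rw [h, mul_one]
      _ = 1 := by rw [← mul_assoc, he.eq, h]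
  exact ⟨he', by rwa [he', one_mul] at h⟩

/-- A homomorphism from words to a monoid that respects the Vagner congruence, that is, factors
through the free inverse monoid. Arguments in an inverse monoid are carried out on images of
words under such a homomorphism, with `φ (wInv u)` playing the role of the inverse of `φ u`. -/
def IsVagnerHom {β N : Type*} [Monoid N] (φ : FreeMonoid (β × Bool) →* N) : Prop :=
  ∀ ⦃u v⦄, vagnerRel β u v → φ u = φ v

namespace IsVagnerHom

variable {β N : Type*} [Monoid N] {φ : FreeMonoid (β × Bool) →* N}

theorem map_idem_mul_self (hφ : IsVagnerHom φ) (u : FreeMonoid (β × Bool)) :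
    φ (idem u) * φ u = φ u := by
  rw [← map_mul]
  exact hφ (Or.inl ⟨u, rfl, rfl⟩)

theorem commute_idem (hφ : IsVagnerHom φ) (u v : FreeMonoid (β × Bool)) :
    Commute (φ (idem u)) (φ (idem v)) := by
  rw [Commute, SemiconjBy, ← map_mul, ← map_mul]
  exact hφ (Or.inr ⟨v, u, rfl, rfl⟩)

theorem isIdempotentElem_idem (hφ : IsVagnerHom φ) (u : FreeMonoid (β × Bool)) :
    IsIdempotentElem (φ (idem u)) := by
  rw [IsIdempotentElem]
  nth_rw 2 3 [idem]
  rw [map_mul, ← mul_assoc, hφ.map_idem_mul_self]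

theorem map_idem_eq_one_iff (hφ : IsVagnerHom φ) {u : FreeMonoid (β × Bool)} :
    φ (idem u) = 1 ↔ ∃ y, φ u * y = 1 := by
  refine ⟨fun h => ⟨φ (wInv u), by rwa [← map_mul]⟩, fun ⟨y, hy⟩ => ?_⟩
  calc φ (idem u) = φ (idem u) * φ u * y := by rw [mul_assoc, hy, mul_one]
    _ = 1 := by rw [hφ.map_idem_mul_self, hy]

theorem map_idem_eq_one_of_mul (hφ : IsVagnerHom φ) {u v : FreeMonoid (β × Bool)}
    (h : φ (idem (u * v)) = 1) : φ (idem u) = 1 := by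
  obtain ⟨y, hy⟩ := hφ.map_idem_eq_one_iff.1 h
  exact hφ.map_idem_eq_one_iff.2 ⟨φ v * y, by rw [← mul_assoc, ← map_mul, hy]⟩

theorem map_idem_mul_eq_swap (hφ : IsVagnerHom φ) (c v : FreeMonoid (β × Bool)) :
    φ (idem c * v) = φ (v * (wInv v * idem c * v)) := by
  calc φ (idem c * v) = φ (idem c) * φ (idem v) * φ v := by
        rw [map_mul, mul_assoc, hφ.map_idem_mul_self]
    _ = φ (idem v) * φ (idem c) * φ v := by rw [hφ.commute_idem]
    _ = φ (v * (wInv v * idem c * v)) := by simp only [idem, map_mul, mul_assoc]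

theorem map_idem_eq_one_of_idem_inserted (hφ : IsVagnerHom φ) {u c v : FreeMonoid (β × Bool)}
    (h : φ (idem (u * (idem c * v))) = 1) : φ (idem (u * v)) = 1 := by
  obtain ⟨y, hy⟩ := hφ.map_idem_eq_one_iff.1 h
  refine hφ.map_idem_eq_one_iff.2 ⟨φ (wInv v * idem c * v) * y, ?_⟩
  rw [← hy, ← mul_assoc, ← map_mul, mul_assoc u, map_mul, ← hφ.map_idem_mul_eq_swap, ← map_mul]

theorem map_prod_idem_mul_eq_one_iff (hφ : IsVagnerHom φ) (L : List (FreeMonoid (β × Bool)))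
    (y : N) : φ (L.map idem).prod * y = 1 ↔ (∀ u ∈ L, φ (idem u) = 1) ∧ y = 1 := by
  induction L with
  | nil => simp
  | cons u L ih =>
    rw [List.map_cons, List.prod_cons, map_mul, mul_assoc,
      mul_eq_one_iff_of_isIdempotentElem (hφ.isIdempotentElem_idem u), ih,
      List.forall_mem_cons, and_assoc]

end IsVagnerHom

theorem map_idem_mul_eq_one {β N : Type*} [Monoid N] {φ : FreeMonoid (β × Bool) →* N}
    {u v : FreeMonoid (β × Bool)} (hu : φ (idem u) = 1) (hv : φ (idem v) = 1) :
    φ (idem (u * v)) = 1 := by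
  rw [idem_mul, map_mul, map_mul, hv, mul_one, ← map_mul]
  exact hu

/-! ### Words as elements of groups -/

/-- The element of the free group spelled by a word, as a monoid homomorphism. -/
def freeGroupOfWord (α : Type*) : FreeMonoid (α × Bool) →* FreeGroup α where
  toFun u := FreeGroup.mk (FreeMonoid.toList u)
  map_one' := rfl
  map_mul' _ _ := rfl

theorem freeGroupOfWord_of_true {α : Type*} (a : α) :
    freeGroupOfWord α (FreeMonoid.of (a, true)) = FreeGroup.of a := rfl

theorem freeGroupOfWord_of_false {α : Type*} (a : α) :
    freeGroupOfWord α (FreeMonoid.of (a, false)) = (FreeGroup.of a)⁻¹ := rfl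

theorem exists_lift_freeGroup {α N : Type*} [Monoid N] (ψ : FreeMonoid (α × Bool) →* N)
    (h₁ : ∀ a, ψ (FreeMonoid.of (a, true)) * ψ (FreeMonoid.of (a, false)) = 1)
    (h₂ : ∀ a, ψ (FreeMonoid.of (a, false)) * ψ (FreeMonoid.of (a, true)) = 1) :
    ∃ f : α → Nˣ, ∀ u, (FreeGroup.lift f (freeGroupOfWord α u) : N) = ψ u := by
  refine ⟨fun a => ⟨_, _, h₁ a, h₂ a⟩, DFunLike.congr_fun (?_ :
    (Units.coeHom N).comp ((FreeGroup.lift _).comp (freeGroupOfWord α)) = ψ)⟩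
  refine FreeMonoid.hom_eq ?_
  rintro ⟨a, _ | _⟩ <;> simp [freeGroupOfWord_of_true, freeGroupOfWord_of_false]

section GroupPresentation

variable {n m : ℕ} (r : Fin m → FreeMonoid (Fin n × Bool))

/-- The evaluation map `piG r` as a monoid homomorphism, the `πG` of the construction. -/
def piGHom : FreeMonoid (Fin n × Bool) →* PresentedGroup (relsG r) :=
  (PresentedGroup.mk (relsG r)).comp (freeGroupOfWord (Fin n))

theorem lift_of_freeGroupOfWord (u : FreeMonoid (Fin n × Bool)) :
    FreeGroup.lift (PresentedGroup.of (rels := relsG r)) (freeGroupOfWord (Fin n) u) =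
      piG r u := by
  have h : FreeGroup.lift (PresentedGroup.of (rels := relsG r)) = PresentedGroup.mk (relsG r) :=
    FreeGroup.ext_hom _ _ fun i => FreeGroup.lift_apply_of
  rw [h]
  rfl

theorem piG_relator (i : Fin m) : piG r (r i) = 1 :=
  PresentedGroup.one_of_mem ⟨i, rfl⟩

theorem map_eq_of_piG_eq {N : Type*} [Monoid N] {ψ : FreeMonoid (Fin n × Bool) →* N}
    (h₁ : ∀ a, ψ (FreeMonoid.of (a, true)) * ψ (FreeMonoid.of (a, false)) = 1)
    (h₂ : ∀ a, ψ (FreeMonoid.of (a, false)) * ψ (FreeMonoid.of (a, true)) = 1)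
    (hr : ∀ i, ψ (r i) = 1) {u v : FreeMonoid (Fin n × Bool)} (huv : piG r u = piG r v) :
    ψ u = ψ v := by
  obtain ⟨f, hf⟩ := exists_lift_freeGroup ψ h₁ h₂
  have hrels : ∀ x ∈ relsG r, FreeGroup.lift f x = 1 := by
    rintro _ ⟨i, rfl⟩
    exact Units.ext ((hf (r i)).trans (hr i))
  rw [← hf, ← hf]
  exact congrArg (fun g => (PresentedGroup.toGroup hrels g : N)) huv

theorem mem_subT_iff {k : ℕ} {w : Fin k → FreeMonoid (Fin n × Bool)}
    {g : PresentedGroup (relsG r)} :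
    g ∈ subT r w ↔ ∃ v ∈ Submonoid.closure (Set.range w), piG r v = g := by
  have h : subT r w = (Submonoid.closure (Set.range w)).map (piGHom r) := by
    rw [MonoidHom.map_mclosure, ← Set.range_comp]
    rfl
  rw [h, Submonoid.mem_map]
  rfl

end GroupPresentation

/-! ### The presentation of `M` -/

/-- The word `t u t⁻¹`. -/
def tConj {n : ℕ} (u : FreeMonoid (Fin n × Bool)) : FreeMonoid (B n × Bool) :=
  tW n * emb u * tWinv n

theorem tConj_one (n : ℕ) : tConj (1 : FreeMonoid (Fin n × Bool)) = idem (tW n) := rfl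

theorem tConj_mul_tConj {n : ℕ} (u v : FreeMonoid (Fin n × Bool)) :
    tConj u * tConj v = tW n * emb u * (idem (tWinv n) * (emb v * tWinv n)) := by
  have h : idem (tWinv n) = tWinv n * tW n := rfl
  simp only [tConj, h, mul_assoc]

theorem idem_aW_eq_emb {n : ℕ} (i : Fin n) :
    idem (aW i) = emb (FreeMonoid.of (i, true) * FreeMonoid.of (i, false)) := rfl

theorem idem_wInv_aW_eq_emb {n : ℕ} (i : Fin n) :
    idem (wInv (aW i)) = emb (FreeMonoid.of (i, false) * FreeMonoid.of (i, true)) := rfl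

theorem eWord_eq {n k : ℕ} (w : Fin k → FreeMonoid (Fin n × Bool)) :
    eWord w = ((List.ofFn aW ++ List.ofFn (fun j => tConj (w j)) ++
      List.ofFn fun i => wInv (aW i)).map idem).prod := by
  simp only [List.map_append, List.map_ofFn]
  rfl

/-- The relations of `M` with the idempotent word `e` resolved into its factors: a homomorphism
`φ` satisfies them exactly when it factors through `M`, see `invCon_le_ker_iff`. -/
structure SatisfiesRelations {n m k : ℕ} {N : Type*} [Monoid N]
    (r : Fin m → FreeMonoid (Fin n × Bool)) (w : Fin k → FreeMonoid (Fin n × Bool))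
    (φ : FreeMonoid (B n × Bool) →* N) : Prop where
  isVagnerHom : IsVagnerHom φ
  idem_aW : ∀ i, φ (idem (aW i)) = 1
  idem_wInv_aW : ∀ i, φ (idem (wInv (aW i))) = 1
  idem_tConj : ∀ j, φ (idem (tConj (w j))) = 1
  relator : ∀ i, φ (emb (r i)) = 1

section Presentation

variable {n m k : ℕ} {N : Type*} [Monoid N] {r : Fin m → FreeMonoid (Fin n × Bool)}
  {w : Fin k → FreeMonoid (Fin n × Bool)} {φ : FreeMonoid (B n × Bool) →* N}

theorem IsVagnerHom.map_eWord_mul_eq_one_iff (hφ : IsVagnerHom φ) {y : N} :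
    φ (eWord w) * y = 1 ↔
      (((∀ i, φ (idem (aW i)) = 1) ∧ ∀ j, φ (idem (tConj (w j))) = 1) ∧
        ∀ i, φ (idem (wInv (aW i))) = 1) ∧ y = 1 := by
  simp only [eWord_eq, hφ.map_prod_idem_mul_eq_one_iff, List.forall_mem_append,
    List.forall_mem_ofFn_iff]

theorem invCon_le_ker_iff (hm : 0 < m) :
    invCon hm r w ≤ Con.ker φ ↔ SatisfiesRelations r w φ := by
  rw [invCon, Con.conGen_le]
  constructor
  · intro h
    have hφ : IsVagnerHom φ := fun u v huv => h u v (Or.inl huv)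
    have he : φ (eWord w) * φ (emb (r ⟨0, hm⟩)) = 1 := by
      rw [← map_mul, ← map_one φ]
      exact h _ _ (Or.inr (Or.inl ⟨rfl, rfl⟩))
    obtain ⟨⟨⟨ha, ht⟩, ha'⟩, hr₁⟩ := hφ.map_eWord_mul_eq_one_iff.1 he
    refine ⟨hφ, ha, ha', ht, fun i => ?_⟩
    by_cases hi : i = ⟨0, hm⟩
    · rw [hi, hr₁]
    · exact (h _ _ (Or.inr (Or.inr ⟨i, hi, rfl, rfl⟩))).trans (map_one φ)
  · rintro h u v (huv | ⟨rfl, rfl⟩ | ⟨i, -, rfl, rfl⟩)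
    · exact h.isVagnerHom huv
    · rw [Con.ker_rel, map_mul, map_one, h.isVagnerHom.map_eWord_mul_eq_one_iff]
      exact ⟨⟨⟨h.idem_aW, h.idem_tConj⟩, h.idem_wInv_aW⟩, h.relator _⟩
    · rw [Con.ker_rel, map_one, h.relator]

namespace SatisfiesRelations

theorem map_emb_eq_of_piG_eq (h : SatisfiesRelations r w φ) {u v : FreeMonoid (Fin n × Bool)}
    (huv : piG r u = piG r v) : φ (emb u) = φ (emb v) :=
  map_eq_of_piG_eq r (ψ := φ.comp emb)
    (fun i => by rw [← map_mul, MonoidHom.comp_apply, ← idem_aW_eq_emb, h.idem_aW])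
    (fun i => by rw [← map_mul, MonoidHom.comp_apply, ← idem_wInv_aW_eq_emb, h.idem_wInv_aW])
    h.relator huv

theorem map_idem_tConj_one (h : SatisfiesRelations r w φ) (j : Fin k) :
    φ (idem (tConj 1)) = 1 := by
  have ht : φ (idem (tW n)) = 1 := by
    have hj := h.idem_tConj j
    rw [tConj, mul_assoc] at hj
    exact h.isVagnerHom.map_idem_eq_one_of_mul hj
  exact h.isVagnerHom.map_idem_eq_one_iff.2 ⟨1, by rw [tConj_one, ht, one_mul]⟩

theorem map_idem_tConj_mul (h : SatisfiesRelations r w φ) {u v : FreeMonoid (Fin n × Bool)}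
    (hu : φ (idem (tConj u)) = 1) (hv : φ (idem (tConj v)) = 1) :
    φ (idem (tConj (u * v))) = 1 := by
  have huv := map_idem_mul_eq_one hu hv
  rw [tConj_mul_tConj] at huv
  have h' := h.isVagnerHom.map_idem_eq_one_of_idem_inserted huv
  rwa [← mul_assoc, mul_assoc (tW n), ← map_mul] at h'

theorem map_idem_tConj_of_mem_subT (h : SatisfiesRelations r w φ) (hk : 0 < k)
    {u : FreeMonoid (Fin n × Bool)} (hu : piG r u ∈ subT r w) : φ (idem (tConj u)) = 1 := by
  obtain ⟨v, hv, hvu⟩ := (mem_subT_iff r).1 hu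
  have hconj : φ (tConj u) = φ (tConj v) := by
    simp only [tConj, map_mul, h.map_emb_eq_of_piG_eq hvu]
  rw [h.isVagnerHom.map_idem_eq_one_iff, hconj, ← h.isVagnerHom.map_idem_eq_one_iff]
  clear hconj hvu
  induction hv using Submonoid.closure_induction with
  | mem _ hw =>
    obtain ⟨j, rfl⟩ := hw
    exact h.idem_tConj j
  | one => exact h.map_idem_tConj_one ⟨0, hk⟩
  | mul _ _ _ _ hx hy => exact h.map_idem_tConj_mul hx hy

end SatisfiesRelations

end Presentation

/-! ### Actions by partial bijections -/

section PartialBijections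

variable {X : Type*}

/-- The symmetric inverse monoid on `X`. The product `f * g` applies `f` first, so that words act
from the right. -/
instance : Monoid (X ≃. X) where
  one := PEquiv.refl X
  mul f g := f.trans g
  one_mul := PEquiv.refl_trans
  mul_one := PEquiv.trans_refl
  mul_assoc := PEquiv.trans_assoc

theorem pequiv_one_apply (x : X) : (1 : X ≃. X) x = some x := rfl

theorem pequiv_mul_eq_some_iff {f g : X ≃. X} {x z : X} :
    (f * g) x = some z ↔ ∃ y, f x = some y ∧ g y = some z :=
  PEquiv.trans_eq_some f g x z

theorem pequiv_mul_symm_eq_some_iff {f : X ≃. X} {x y : X} :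
    (f * f.symm) x = some y ↔ (f x).isSome ∧ x = y := by
  have h : f * f.symm = PEquiv.ofSet {x | (f x).isSome} := PEquiv.self_trans_symm f
  rw [h, PEquiv.ofSet_eq_some_iff]
  constructor <;> rintro ⟨h₁, h₂⟩ <;> simp_all

theorem pequiv_mul_symm_mul (f : X ≃. X) : f * f.symm * f = f := by
  ext x y
  rw [pequiv_mul_eq_some_iff]
  simp only [pequiv_mul_symm_eq_some_iff]
  refine ⟨?_, fun h => ⟨x, ⟨Option.isSome_of_mem h, rfl⟩, h⟩⟩
  rintro ⟨_, ⟨-, rfl⟩, h⟩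
  exact h

theorem commute_pequiv_mul_symm (f g : X ≃. X) : Commute (f * f.symm) (g * g.symm) := by
  have h (f g : X ≃. X) (x y : X) : (f * f.symm * (g * g.symm)) x = some y ↔
      ((f x).isSome ∧ (g x).isSome) ∧ x = y := by
    rw [pequiv_mul_eq_some_iff]
    simp only [pequiv_mul_symm_eq_some_iff, and_assoc, exists_and_left, exists_eq_left']
  rw [Commute, SemiconjBy]
  ext x y
  rw [h, h, and_comm (a := (f x).isSome = true)]

/-- An injection, seen as a partial bijection defined everywhere. -/
noncomputable def pequivOfInjective {Y : Type*} (f : X → Y) (hf : f.Injective) : X ≃. Y where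
  toFun x := some (f x)
  invFun := f.partialInv
  inv x y := by rw [hf.isPartialInv x y, Option.some_inj]

variable {β : Type*}

/-- The action of words by partial bijections in which the generator `b` acts by `f b`. -/
def pequivHom (f : β → X ≃. X) : FreeMonoid (β × Bool) →* (X ≃. X) :=
  FreeMonoid.lift fun p => if p.2 then f p.1 else (f p.1).symm

variable (f : β → X ≃. X)

theorem pequivHom_wInv (u : FreeMonoid (β × Bool)) :
    pequivHom f (wInv u) = (pequivHom f u).symm := by
  induction u using FreeMonoid.inductionOn with
  | one => rfl
  | of p =>
    obtain ⟨b, _ | _⟩ := p <;> simp [pequivHom, wInv_of]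
  | mul u v hu hv =>
    rw [wInv_mul, map_mul, map_mul, hu, hv]
    exact (PEquiv.symm_trans_rev _ _).symm

theorem isVagnerHom_pequivHom : IsVagnerHom (pequivHom f) := by
  rintro _ _ (⟨u, rfl, rfl⟩ | ⟨u, v, rfl, rfl⟩)
  · rw [map_mul, map_mul, pequivHom_wInv, pequiv_mul_symm_mul]
  · simp only [map_mul, pequivHom_wInv]
    exact commute_pequiv_mul_symm _ _

theorem pequivHom_idem_eq_one_iff (u : FreeMonoid (β × Bool)) :
    pequivHom f (idem u) = 1 ↔ ∀ x, (pequivHom f u x).isSome := by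
  rw [idem, map_mul, pequivHom_wInv]
  exact PEquiv.trans_symm_eq_iff_forall_isSome

end PartialBijections

/-! ### The representation of `M` attached to a submonoid of a group -/

section Tape

variable {G : Type*} [Group G]

/-- The set on which the letters act, for a submonoid `T` of `G`. The two streams make `Tape T`
large enough to be mapped bijectively onto its part with first coordinate in `T`. -/
abbrev Tape (T : Submonoid G) : Type _ := G × Stream' G × Stream' T

/-- The action of the stable letter `t`: it pushes the first coordinate onto the stream in `G` and
replaces it by an element popped from the stream in `T`. -/
def tapeShift {T : Submonoid G} (x : Tape T) : Tape T :=
  (x.2.2.head, x.2.1.cons x.1, x.2.2.tail)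

variable (T : Submonoid G)

theorem tapeShift_injective : Function.Injective (tapeShift (T := T)) := by
  rintro ⟨g, a, b⟩ ⟨g', a', b'⟩ h
  obtain ⟨hhead, hrest⟩ := Prod.ext_iff.1 h
  obtain ⟨hcons, htail⟩ := Prod.ext_iff.1 hrest
  obtain ⟨rfl, rfl⟩ := Stream'.cons_injective2 hcons
  rw [← Stream'.eta b, ← Stream'.eta b', Subtype.ext hhead, show b.tail = b'.tail from htail]

theorem mem_range_tapeShift_iff {y : Tape T} : y ∈ Set.range tapeShift ↔ y.1 ∈ T := by
  obtain ⟨g, a, b⟩ := y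
  constructor
  · rintro ⟨x, hx⟩
    rw [← hx]
    exact x.2.2.head.2
  · intro hg
    exact ⟨(a.head, a.tail, b.cons ⟨g, hg⟩), by simp [tapeShift]⟩

/-- The action of `G` on `Tape T` by right multiplication on the first coordinate. -/
def tapeMulRight : G →* (Tape T ≃. Tape T) where
  toFun g := ((Equiv.mulRight g).prodCongr (Equiv.refl _)).toPEquiv
  map_one' := by
    ext x : 1
    simp [pequiv_one_apply]
  map_mul' g h := by
    ext x y
    simp [pequiv_mul_eq_some_iff, Prod.map, mul_assoc]

theorem tapeMulRight_apply (g : G) (x : Tape T) : tapeMulRight T g x = some (x.1 * g, x.2) := rfl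

theorem tapeMulRight_inv (g : G) : tapeMulRight T g⁻¹ = (tapeMulRight T g).symm := by
  change _ = (Equiv.toPEquiv _).symm
  rw [← Equiv.toPEquiv_symm]
  ext x : 1
  rfl

variable {n : ℕ} (a : Fin n → G)

/-- The action of words on `Tape T` in which `aᵢ` acts by right multiplication by `a i` and `t`
by `tapeShift`. -/
noncomputable def tapeHom : FreeMonoid (B n × Bool) →* (Tape T ≃. Tape T) :=
  pequivHom (Sum.elim (fun i => tapeMulRight T (a i))
    fun _ => pequivOfInjective tapeShift (tapeShift_injective T))

theorem tapeHom_emb (u : FreeMonoid (Fin n × Bool)) :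
    tapeHom T a (emb u) = tapeMulRight T (FreeGroup.lift a (freeGroupOfWord (Fin n) u)) := by
  suffices h : (tapeHom T a).comp emb =
      ((tapeMulRight T).comp (FreeGroup.lift a)).comp (freeGroupOfWord (Fin n)) from
    DFunLike.congr_fun h u
  refine FreeMonoid.hom_eq ?_
  rintro ⟨i, _ | _⟩
  · simp only [MonoidHom.comp_apply, freeGroupOfWord_of_false, map_inv, FreeGroup.lift_apply_of,
      tapeMulRight_inv]
    rfl
  · simp only [MonoidHom.comp_apply, freeGroupOfWord_of_true, FreeGroup.lift_apply_of]
    rfl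

theorem tapeHom_tW (x : Tape T) : tapeHom T a (tW n) x = some (tapeShift x) := rfl

theorem tapeHom_tWinv : tapeHom T a (tWinv n) = (tapeHom T a (tW n)).symm := rfl

theorem tapeHom_tConj_eq_some_iff (u : FreeMonoid (Fin n × Bool)) (x z : Tape T) :
    tapeHom T a (tConj u) x = some z ↔
      tapeShift z = ((tapeShift x).1 * FreeGroup.lift a (freeGroupOfWord (Fin n) u),
        (tapeShift x).2) := by
  rw [tConj, map_mul, map_mul, tapeHom_tWinv, tapeHom_emb]
  simp only [pequiv_mul_eq_some_iff, tapeHom_tW, tapeMulRight_apply, PEquiv.eq_some_iff,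
    Option.some_inj, exists_eq_left']

theorem tapeHom_idem_tConj_eq_one_iff (u : FreeMonoid (Fin n × Bool)) :
    tapeHom T a (idem (tConj u)) = 1 ↔
      FreeGroup.lift a (freeGroupOfWord (Fin n) u) ∈ T := by
  set g := FreeGroup.lift a (freeGroupOfWord (Fin n) u)
  have hdefined (x : Tape T) : (tapeHom T a (tConj u) x).isSome ↔ (tapeShift x).1 * g ∈ T := by
    rw [Option.isSome_iff_exists, ← mem_range_tapeShift_iff T (y := ((tapeShift x).1 * g, _))]
    exact exists_congr fun z => tapeHom_tConj_eq_some_iff T a u x z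
  rw [tapeHom, pequivHom_idem_eq_one_iff]
  change (∀ x, (tapeHom T a (tConj u) x).isSome) ↔ _
  simp only [hdefined]
  refine ⟨fun h => ?_, fun h x => T.mul_mem x.2.2.head.2 h⟩
  have h₁ : 1 * g ∈ T := h (1, Stream'.const 1, Stream'.const 1)
  rwa [one_mul] at h₁

theorem satisfiesRelations_tapeHom {m k : ℕ} {r : Fin m → FreeMonoid (Fin n × Bool)}
    {w : Fin k → FreeMonoid (Fin n × Bool)}
    (hr : ∀ i, FreeGroup.lift a (freeGroupOfWord (Fin n) (r i)) = 1)
    (hw : ∀ j, FreeGroup.lift a (freeGroupOfWord (Fin n) (w j)) ∈ T) :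
    SatisfiesRelations r w (tapeHom T a) where
  isVagnerHom := isVagnerHom_pequivHom _
  idem_aW i := by
    rw [idem_aW_eq_emb, tapeHom_emb, map_mul, freeGroupOfWord_of_true, freeGroupOfWord_of_false,
      mul_inv_cancel, map_one, map_one]
  idem_wInv_aW i := by
    rw [idem_wInv_aW_eq_emb, tapeHom_emb, map_mul, freeGroupOfWord_of_true,
      freeGroupOfWord_of_false, inv_mul_cancel, map_one, map_one]
  idem_tConj j := (tapeHom_idem_tConj_eq_one_iff T a (w j)).2 (hw j)
  relator i := by rw [tapeHom_emb, hr, map_one]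

end Tape

theorem piG_mem_subT_iff {n m k : ℕ} (hm : 0 < m) (hk : 0 < k)
    (r : Fin m → FreeMonoid (Fin n × Bool)) (w : Fin k → FreeMonoid (Fin n × Bool))
    (u : FreeMonoid (Fin n × Bool)) :
    piG r u ∈ subT r w ↔ invCon hm r w (idem (tConj u)) 1 := by
  constructor
  · intro hu
    have hM : SatisfiesRelations r w (invCon hm r w).mk' :=
      (invCon_le_ker_iff hm).1 (Con.mk'_ker _).ge
    exact (Con.eq _).1 (hM.map_idem_tConj_of_mem_subT hk hu)
  · intro hu
    have hrep : SatisfiesRelations r w (tapeHom (subT r w) PresentedGroup.of) := by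
      refine satisfiesRelations_tapeHom _ _ (fun i => ?_) fun j => ?_
      · rw [lift_of_freeGroupOfWord, piG_relator]
      · rw [lift_of_freeGroupOfWord]
        exact Submonoid.subset_closure ⟨j, rfl⟩
    rw [← lift_of_freeGroupOfWord, ← tapeHom_idem_tConj_eq_one_iff, ← map_one (tapeHom _ _)]
    exact (invCon_le_ker_iff hm).2 hrep hu

/-! ### Computability of the reduction -/

section Computability

variable {α : Type*} [Primcodable α]

theorem primrec_freeMonoid_toList : Primrec (FreeMonoid.toList : FreeMonoid α → List α) :=
  Primrec.of_equiv

theorem primrec_freeMonoid_ofList : Primrec (FreeMonoid.ofList : List α → FreeMonoid α) :=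
  Primrec.of_equiv_symm

theorem primrec_freeMonoid_mul : Primrec₂ fun u v : FreeMonoid α => u * v :=
  primrec_freeMonoid_ofList.comp <| Primrec.list_append.comp
    (primrec_freeMonoid_toList.comp .fst) (primrec_freeMonoid_toList.comp .snd)

theorem primrec_freeMonoid_map {γ : Type*} [Primcodable γ] {f : α → γ} (hf : Primrec f) :
    Primrec (FreeMonoid.map f) :=
  primrec_freeMonoid_ofList.comp <|
    Primrec.list_map primrec_freeMonoid_toList (hf.comp .snd).to₂

theorem primrec_wInv : Primrec (wInv : FreeMonoid (α × Bool) → FreeMonoid (α × Bool)) :=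
  primrec_freeMonoid_ofList.comp <| Primrec.list_reverse.comp <|
    Primrec.list_map primrec_freeMonoid_toList
      (Primrec.pair (Primrec.fst.comp .snd) (Primrec.not.comp (Primrec.snd.comp .snd))).to₂

theorem primrec_idem : Primrec (idem : FreeMonoid (α × Bool) → FreeMonoid (α × Bool)) :=
  primrec_freeMonoid_mul.comp .id primrec_wInv

theorem primrec_tConj (n : ℕ) : Primrec (tConj (n := n)) :=
  have hemb : Primrec (emb (n := n)) :=
    primrec_freeMonoid_map (Primrec.pair (Primrec.sumInl.comp .fst) .snd)
  primrec_freeMonoid_mul.comp (primrec_freeMonoid_mul.comp (.const _) hemb) (.const _)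

end Computability

/-- If the word problem for the inverse monoid `M = Inv⟨B | e·r₁ = 1, r₂ = 1, …, r_m = 1⟩`
is decidable, then the membership problem for `T = ⟨πG w₁, …, πG w_k⟩` within
`G = Gp⟨Fin n | r₁ = 1, …, r_m = 1⟩` is decidable. -/
theorem membership_decidable_of_wordProblem_decidable {n m k : ℕ}
    (hn : 0 < n) (hm : 0 < m) (hk : 0 < k)
    (r : Fin m → FreeMonoid (Fin n × Bool)) (w : Fin k → FreeMonoid (Fin n × Bool))
    (hWP : ComputablePred
      (fun p : FreeMonoid (B n × Bool) × FreeMonoid (B n × Bool) => invCon hm r w p.1 p.2)) :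
    ComputablePred (fun u : FreeMonoid (Fin n × Bool) => piG r u ∈ subT r w) := by
  have hcomp : Computable fun u : FreeMonoid (Fin n × Bool) =>
      (idem (tConj u), (1 : FreeMonoid (B n × Bool))) :=
    ((primrec_idem.comp (primrec_tConj n)).pair (.const 1)).to_comp
  exact hWP.computable_of_manyOneReducible ⟨_, hcomp, piG_mem_subT_iff hm hk r w⟩
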